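/- arXiv:1203.2683 — 5 statements merged into one kernel-verified Lean document; each statement's English description precedes it below -/
import Mathlib

section
/- Let N be a positive integer and let A be an m × 4 matrix with entries in ℤ/Nℤ. Then the row span of A (the subgroup of (ℤ/Nℤ)⁴ generated by the rows of A) and the column span of A (the subgroup of (ℤ/Nℤ)^m generated by the columns of A) are finite sets of the same cardinality. -/
/-!
Let `ψ` be the standard primitive character of `ℤ/Nℤ`, and evaluate `∑ x y, ψ (x ⬝ᵥ A *ᵥ y)` in two
ways. Summing over `x` first, orthogonality gives `N ^ m * #ker A`; summing over `y` first gives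
`N ^ 4 * #ker Aᵀ`. Since `#ker A = N ^ 4 / #(column span)` and `#ker Aᵀ = N ^ m / #(row span)`,
the two spans have the same cardinality. The argument works for matrices of any shape.
-/

/-- Over `ℤ/Nℤ`, the additive closure of a set is the same as its linear span. -/
lemma closure_eq_span {N : ℕ} {ι : Type*} (S : Set (ι → ZMod N)) :
    AddSubgroup.closure S = (Submodule.span (ZMod N) S).toAddSubgroup := by
  apply le_antisymm
  · rw [AddSubgroup.closure_le]
    exact Submodule.subset_span
  · intro x hx
    have h : Submodule.span (ZMod N) S ≤
        AddSubgroup.toZModSubmodule N (AddSubgroup.closure S) := by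
      rw [Submodule.span_le]
      exact AddSubgroup.subset_closure
    exact h hx

/-- Orthogonality: for `v ≠ 0` the character `x ↦ ψ (x ⬝ᵥ v)` is nontrivial, because `ψ` is
primitive. -/
lemma sum_stdAddChar_dotProduct {N : ℕ} [NeZero N] {ι : Type*} [Fintype ι] [DecidableEq ι]
    (v : ι → ZMod N) :
    ∑ x : ι → ZMod N, ZMod.stdAddChar (x ⬝ᵥ v) =
      if v = 0 then (Fintype.card (ι → ZMod N) : ℂ) else 0 := by
  split_ifs with hv
  · simp [hv]
  · obtain ⟨j, hj⟩ := Function.ne_iff.mp hv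
    let f : (ι → ZMod N) →+ ZMod N :=
      { toFun := fun x => x ⬝ᵥ v
        map_zero' := zero_dotProduct v
        map_add' := fun x y => add_dotProduct x y v }
    refine AddChar.sum_eq_zero_of_ne_one (ψ := ZMod.stdAddChar.compAddMonoidHom f) fun h => ?_
    refine ZMod.isPrimitive_stdAddChar N hj ?_
    ext a
    have := DFunLike.congr_fun h (Pi.single j a)
    simpa [f, mul_comm, AddChar.mulShift_apply] using this

/-- The double character sum, computed by orthogonality in the row variable `x`. Applied to both
`A` and its transpose, it relates the two kernels. -/
lemma sum_stdAddChar_bilinear {N : ℕ} [NeZero N] {ι κ : Type*} [Fintype ι] [Fintype κ]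
    [DecidableEq ι] [DecidableEq κ] (A : Matrix ι κ (ZMod N)) :
    ∑ y : κ → ZMod N, ∑ x : ι → ZMod N, ZMod.stdAddChar (x ⬝ᵥ A.mulVec y) =
      ((Nat.card (ι → ZMod N) * Nat.card (LinearMap.ker A.mulVecLin) : ℕ) : ℂ) := by
  classical
  simp_rw [sum_stdAddChar_dotProduct]
  rw [← Finset.sum_filter, Finset.sum_const, nsmul_eq_mul, Nat.card_eq_fintype_card,
    Nat.cast_mul, mul_comm]
  congr 2
  rw [← Fintype.card_subtype, ← Nat.card_eq_fintype_card]
  rfl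

lemma card_range_mul_card_ker {N : ℕ} {ι κ : Type*} [Fintype κ] (A : Matrix ι κ (ZMod N)) :
    Nat.card (LinearMap.range A.mulVecLin) * Nat.card (LinearMap.ker A.mulVecLin) =
      Nat.card (κ → ZMod N) := by
  rw [Submodule.card_eq_card_quotient_mul_card (LinearMap.ker A.mulVecLin),
    Nat.card_congr A.mulVecLin.quotKerEquivRange.toEquiv, mul_comm]

lemma card_range_transpose {N : ℕ} [NeZero N] {ι κ : Type*} [Fintype ι] [Fintype κ]
    [DecidableEq ι] [DecidableEq κ] (A : Matrix ι κ (ZMod N)) :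
    Nat.card (LinearMap.range A.transpose.mulVecLin) =
      Nat.card (LinearMap.range A.mulVecLin) := by
  have h : Nat.card (ι → ZMod N) * Nat.card (LinearMap.ker A.mulVecLin) =
      Nat.card (κ → ZMod N) * Nat.card (LinearMap.ker A.transpose.mulVecLin) := by
    have h1 := sum_stdAddChar_bilinear A
    have h2 := sum_stdAddChar_bilinear A.transpose
    rw [Finset.sum_comm] at h2
    have h3 (x : ι → ZMod N) (y : κ → ZMod N) :
        y ⬝ᵥ A.transpose.mulVec x = x ⬝ᵥ A.mulVec y := by
      rw [Matrix.mulVec_transpose, dotProduct_comm, Matrix.dotProduct_mulVec]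
    simp_rw [h3] at h2
    exact_mod_cast h1.symm.trans h2
  rw [← card_range_mul_card_ker A, ← card_range_mul_card_ker A.transpose] at h
  have p1 : 0 < Nat.card (LinearMap.ker A.mulVecLin) := Nat.card_pos
  have p2 : 0 < Nat.card (LinearMap.ker A.transpose.mulVecLin) := Nat.card_pos
  apply Nat.eq_of_mul_eq_mul_right (Nat.mul_pos p1 p2)
  linarith


/-- The row span and column span of an `m × 4` matrix over `ℤ/Nℤ` (`N > 0`) are finite
sets of the same cardinality. -/
theorem stmt_0 (N : ℕ) (hN : 0 < N) (m : ℕ) (A : Matrix (Fin m) (Fin 4) (ZMod N)) :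
    (AddSubgroup.closure (Set.range fun i : Fin m => A i) :
      Set (Fin 4 → ZMod N)).Finite ∧
    (AddSubgroup.closure (Set.range fun j : Fin 4 => fun i : Fin m => A i j) :
      Set (Fin m → ZMod N)).Finite ∧
    Nat.card (AddSubgroup.closure (Set.range fun i : Fin m => A i)) =
      Nat.card (AddSubgroup.closure (Set.range fun j : Fin 4 => fun i : Fin m => A i j)) := by
  have : NeZero N := ⟨hN.ne'⟩
  refine ⟨Set.toFinite _, Set.toFinite _, ?_⟩
  rw [closure_eq_span, closure_eq_span]
  have h := card_range_transpose A
  rw [Matrix.range_mulVecLin, Matrix.range_mulVecLin] at h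
  exact h
end

section
/- Let N be a positive integer, let z₁, z₂, z₃, z₄ ∈ ℂ be pairwise distinct, let Ω be an algebraic closure of ℂ(z), and choose u₁, u₂, u₃, u₄ ∈ Ω with u_j^N = z − z_j for j = 1,2,3,4. Then the N⁴ monomials ∏_{j=1}^4 u_j^{c_j}, where 0 ≤ c_j < N, are linearly independent over ℂ(z); equivalently, the field ℂ(z)(u₁,u₂,u₃,u₄) has degree N⁴ over ℂ(z). -/
/-!
Every monomial `m` in the `uⱼ` satisfies `m ^ N ∈ ℂ(z)`, and `ℂ(z)` contains all `N`-th roots of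
unity, so `σ ↦ σ m / m` is a character of `Gal(Ω / ℂ(z))` (`kummerChar`). If two monomials have the
same character, their quotient is Galois invariant, hence a rational function `r`; comparing orders
of vanishing at `zⱼ` in `r ^ N ∏ (z - zⱼ) ^ dⱼ = ∏ (z - zⱼ) ^ cⱼ` gives `N ∣ cⱼ - dⱼ`, so `c = d`
(`exponents_eq`). Thus the characters are pairwise distinct, and Dedekind's theorem on the linear
independence of characters shows that the monomials are linearly independent
(`linearIndependent_of_pow_mem`).
-/

open Polynomial in
lemma rootMultiplicity_prod_X_sub_C_pow {ι : Type*} [Fintype ι] (z : ι → ℂ)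
    (hz : Function.Injective z) (e : ι → ℕ) (i : ι) :
    (∏ j, (X - C (z j)) ^ e j : ℂ[X]).rootMultiplicity (z i) = e i := by
  classical
  have hne : (∏ j, (X - C (z j)) ^ e j : ℂ[X]) ≠ 0 :=
    Finset.prod_ne_zero_iff.2 fun j _ => pow_ne_zero _ (X_sub_C_ne_zero _)
  rw [← count_roots, roots_prod _ _ hne]
  simp [Multiset.count_bind, Multiset.count_singleton, hz.eq_iff]

open Polynomial in
/-- Two products of powers of the distinct linear factors `z - zⱼ`, with all exponents below `N`,
have the same exponents if they differ by the `N`-th power of a rational function: compare the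
orders of vanishing at each `zᵢ` modulo `N`. -/
lemma exponents_eq {ι : Type*} [Fintype ι] {N : ℕ} (z : ι → ℂ)
    (hz : Function.Injective z) (c d : ι → Fin N) (r : RatFunc ℂ)
    (h : r ^ N * ∏ j, (RatFunc.X - RatFunc.C (z j)) ^ (d j : ℕ) =
      ∏ j, (RatFunc.X - RatFunc.C (z j)) ^ (c j : ℕ)) : c = d := by
  have hne (e : ι → ℕ) : (∏ j, (X - C (z j)) ^ e j : ℂ[X]) ≠ 0 :=
    Finset.prod_ne_zero_iff.2 fun j _ => pow_ne_zero _ (X_sub_C_ne_zero _)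
  have hmap (e : ι → ℕ) : algebraMap ℂ[X] (RatFunc ℂ) (∏ j, (X - C (z j)) ^ e j) =
      ∏ j, (RatFunc.X - RatFunc.C (z j)) ^ e j := by
    simp [map_prod]
  have hq : r.denom ≠ 0 := r.denom_ne_zero
  have hq' : algebraMap ℂ[X] (RatFunc ℂ) r.denom ≠ 0 := RatFunc.algebraMap_ne_zero hq
  have key : r.num ^ N * ∏ j, (X - C (z j)) ^ (d j : ℕ) =
      r.denom ^ N * ∏ j, (X - C (z j)) ^ (c j : ℕ) := by
    apply RatFunc.algebraMap_injective ℂ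
    rw [map_mul, map_mul, hmap (fun j => d j), hmap (fun j => c j), ← h, map_pow, map_pow,
      ← mul_assoc, ← mul_pow]
    congr 2
    nth_rewrite 3 [← RatFunc.num_div_denom r]
    field_simp
  have hp : r.num ^ N ≠ 0 := by
    intro h0
    rw [h0, zero_mul] at key
    exact mul_ne_zero (pow_ne_zero _ hq) (hne fun j => c j) key.symm
  funext i
  have hm := congrArg (rootMultiplicity (z i)) key
  rw [rootMultiplicity_mul (mul_ne_zero hp (hne fun j => d j)),
    rootMultiplicity_mul (mul_ne_zero (pow_ne_zero _ hq) (hne fun j => c j)),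
    rootMultiplicity_prod_X_sub_C_pow z hz (fun j => d j),
    rootMultiplicity_prod_X_sub_C_pow z hz (fun j => c j),
    ← count_roots, ← count_roots, roots_pow, roots_pow, Multiset.count_nsmul,
    Multiset.count_nsmul] at hm
  have hmod := congrArg (· % N) hm
  simp only [Nat.mul_add_mod, Nat.mod_eq_of_lt (Fin.is_lt _)] at hmod
  exact Fin.ext hmod.symm

section Kummer

variable {K L : Type*} [Field K] [Field L] [Algebra K L]

lemma mem_range_of_pow_eq_one {N : ℕ} [NeZero N] {ζ : K} (hζ : IsPrimitiveRoot ζ N) {x : L}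
    (hx : x ^ N = 1) : ∃ k : K, algebraMap K L k = x := by
  obtain ⟨i, -, hi⟩ := (hζ.map_of_injective (algebraMap K L).injective).eq_pow_of_pow_eq_one hx
  exact ⟨ζ ^ i, by rw [map_pow, hi]⟩

/-- The Kummer character `σ ↦ σ m / m` attached to a nonzero `m` with `m ^ N ∈ K`, with values
taken in `L`. It is multiplicative because its values are `N`-th roots of unity, which lie in
`K`. -/
def kummerChar {N : ℕ} [NeZero N] {ζ : K} (hζ : IsPrimitiveRoot ζ N) (m : L) (hm : m ≠ 0) (a : K)
    (hma : m ^ N = algebraMap K L a) : (L ≃ₐ[K] L) →* L where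
  toFun σ := σ m / m
  map_one' := by simp [hm]
  map_mul' σ τ := by
    obtain ⟨k, hk⟩ : ∃ k : K, algebraMap K L k = τ m / m := by
      apply mem_range_of_pow_eq_one hζ
      rw [div_pow, ← map_pow, hma, AlgEquiv.commutes, ← hma, div_self (pow_ne_zero _ hm)]
    have hτ : τ m = algebraMap K L k * m := by rw [hk, div_mul_cancel₀ _ hm]
    rw [AlgEquiv.mul_apply, hτ, map_mul, AlgEquiv.commutes]
    field_simp

/-- Kummer theory: in a Galois extension of a field containing the `N`-th roots of unity, nonzero
elements with `N`-th power in the base field are linearly independent as soon as they are pairwise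
non-proportional over the base field. -/
lemma linearIndependent_of_pow_mem [IsGalois K L] {N : ℕ} [NeZero N] {ζ : K}
    (hζ : IsPrimitiveRoot ζ N) {ι : Type*} (m : ι → L) (hm : ∀ c, m c ≠ 0) (a : ι → K)
    (hma : ∀ c, m c ^ N = algebraMap K L (a c))
    (hprop : ∀ c d, ∀ r : K, algebraMap K L r * m d = m c → c = d) :
    LinearIndependent K m := by
  let χ (c : ι) : (L ≃ₐ[K] L) →* L := kummerChar hζ (m c) (hm c) (a c) (hma c)
  have hχ : Function.Injective χ := by
    intro c d hcd
    have hfix : ∀ σ : L ≃ₐ[K] L, σ (m c / m d) = m c / m d := by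
      intro σ
      have h : σ (m c) / m c = σ (m d) / m d := DFunLike.congr_fun hcd σ
      have hσ : σ (m d) ≠ 0 := by simpa using hm d
      rw [map_div₀, div_eq_div_iff hσ (hm d)]
      rw [div_eq_div_iff (hm c) (hm d)] at h
      rw [h, mul_comm]
    obtain ⟨r, hr⟩ := (InfiniteGalois.mem_range_algebraMap_iff_fixed _).2 hfix
    exact hprop c d r (by rw [hr, div_mul_cancel₀ _ (hm d)])
  have hD : LinearIndependent L fun c => (χ c : (L ≃ₐ[K] L) → L) :=
    (linearIndependent_monoidHom (L ≃ₐ[K] L) L).comp χ hχ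
  rw [linearIndependent_iff'] at hD ⊢
  intro s g hg c hc
  -- Applying `σ` to the relation `∑ g c • m c = 0` scales its terms by the values `χ c σ`.
  have h := hD s (fun c => g c • m c) (by
    funext σ
    have h := congrArg σ hg
    rw [map_sum, map_zero] at h
    rw [Finset.sum_apply, Pi.zero_apply, ← h]
    refine Finset.sum_congr rfl fun c _ => ?_
    change g c • m c * (σ (m c) / m c) = σ (g c • m c)
    rw [map_smul, smul_mul_assoc, mul_div_cancel₀ _ (hm c)]) c hc
  exact (smul_eq_zero.1 h).resolve_right (hm c)

end Kummer

/-- Let `z₁, z₂, z₃, z₄ ∈ ℂ` be pairwise distinct, `Ω` an algebraic closure of `ℂ(z)`, and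
`u₁, …, u₄ ∈ Ω` with `uⱼ^N = z − zⱼ`. Then the `N⁴` monomials `∏ⱼ uⱼ^{cⱼ}`, `0 ≤ cⱼ < N`,
are linearly independent over `ℂ(z)`. -/
theorem stmt_5 (N : ℕ) (hN : 0 < N) (z : Fin 4 → ℂ) (hz : Function.Injective z)
    (Ω : Type*) [Field Ω] [Algebra (RatFunc ℂ) Ω] [IsAlgClosure (RatFunc ℂ) Ω]
    (u : Fin 4 → Ω)
    (hu : ∀ j, u j ^ N = algebraMap (RatFunc ℂ) Ω (RatFunc.X - RatFunc.C (z j))) :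
    LinearIndependent (RatFunc ℂ) (fun c : Fin 4 → Fin N => ∏ j, u j ^ (c j : ℕ)) := by
  have : NeZero N := ⟨hN.ne'⟩
  have : CharZero (RatFunc ℂ) := charZero_of_injective_algebraMap (algebraMap ℂ _).injective
  have : Normal (RatFunc ℂ) Ω := IsAlgClosure.normal _ _
  have : Algebra.IsAlgebraic (RatFunc ℂ) Ω := IsAlgClosure.isAlgebraic
  have : IsGalois (RatFunc ℂ) Ω := ⟨⟩
  have hζ : IsPrimitiveRoot (algebraMap ℂ (RatFunc ℂ) _) N :=
    (Complex.isPrimitiveRoot_exp N hN.ne').map_of_injective (algebraMap ℂ (RatFunc ℂ)).injective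
  have hu0 : ∀ j, u j ≠ 0 := by
    intro j h0
    have h := hu j
    rw [h0, zero_pow hN.ne', eq_comm, map_eq_zero, ← RatFunc.algebraMap_X, ← RatFunc.algebraMap_C,
      ← map_sub] at h
    exact RatFunc.algebraMap_ne_zero (Polynomial.X_sub_C_ne_zero (z j)) h
  have hpow (c : Fin 4 → Fin N) : (∏ j, u j ^ (c j : ℕ)) ^ N =
      algebraMap (RatFunc ℂ) Ω (∏ j, (RatFunc.X - RatFunc.C (z j)) ^ (c j : ℕ)) := by
    rw [map_prod, ← Finset.prod_pow]
    refine Finset.prod_congr rfl fun j _ => ?_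
    rw [map_pow, ← hu, pow_right_comm]
  refine linearIndependent_of_pow_mem hζ _
    (fun c => Finset.prod_ne_zero_iff.2 fun j _ => pow_ne_zero _ (hu0 j)) _ hpow ?_
  intro c d r h
  apply exponents_eq z hz c d r
  apply (algebraMap (RatFunc ℂ) Ω).injective
  rw [map_mul, map_pow, ← hpow, ← hpow, ← mul_pow, h]
end

section
/- Let a, b, c ∈ ℝ such that neither c nor 2−c is zero or a negative integer. Then the function G(λ) = λ^{1−c} · F(a+1−c, b+1−c; 2−c; λ) satisfies the hypergeometric differential equation with parameters (a,b,c) at every λ ∈ ℂ with |λ| < 1 and λ ∉ (−1, 0]; that is, λ(λ−1)G''(λ) + [(a+b+1)λ − c]G'(λ) + ab·G(λ) = 0 on this slit disk. -/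
open Polynomial

/-!
Write `G(z) = z ^ s * F(z)` with `s = 1 - c`, where `F = ∑ qₙ zⁿ` is the hypergeometric series with
parameters `α = a + 1 - c`, `β = b + 1 - c`, `γ = 2 - c`. Since `γ + n` never vanishes, the
coefficients satisfy `(n + 1) (n + γ) qₙ₊₁ = (n + α) (n + β) qₙ`.

Consecutive coefficients thus have ratio tending to `1` (`RatioTendstoOne`), a property inherited by
the coefficients of the formal derivative. Hence `F` can be differentiated termwise twice in the
unit disk (`hasDerivAt_tsum_pow`), and comparing coefficients of `zⁿ` turns the recurrence into
the equation with parameters `(α, β, γ)` for `F` (`hypergeometric_ode`). On the slit disk,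
`z ^ s` is analytic with derivative `s * z ^ s / z`; by the product rule, the equation with
parameters `(a, b, c)` for `z ^ s * F` is `z ^ s` times the one with parameters `(α, β, γ)` for `F`.
-/

open Filter Topology

/-- Consecutive terms of `q` have ratio tending to `1`. The ratio is given by a sequence of
multipliers, so that terms of `q` may vanish (the series may be a polynomial). -/
def RatioTendstoOne (q : ℕ → ℂ) : Prop :=
  ∃ ρ : ℕ → ℂ, Tendsto ρ atTop (𝓝 1) ∧ ∀ n, q (n + 1) = ρ n * q n

/-- Coefficients of the formal derivative of `∑ qₙ zⁿ`. -/
def derivCoeff (q : ℕ → ℂ) (n : ℕ) : ℂ := (n + 1) * q (n + 1)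

lemma RatioTendstoOne.derivCoeff {q : ℕ → ℂ} (h : RatioTendstoOne q) :
    RatioTendstoOne (derivCoeff q) := by
  obtain ⟨ρ, hρ, hq⟩ := h
  refine ⟨fun n => (2 + 1 * (n : ℂ)) / (1 + 1 * n) * ρ (n + 1), ?_, fun n => ?_⟩
  · have h1 := tendsto_add_mul_div_add_mul_atTop_nhds (2 : ℂ) 1 1 one_ne_zero
    simpa using h1.mul (hρ.comp (tendsto_add_atTop_nat 1))
  · have : (1 + (n : ℂ)) ≠ 0 := by
      rw [add_comm]; exact Nat.cast_add_one_ne_zero n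
    simp only [_root_.derivCoeff, one_mul]
    rw [hq (n + 1), add_comm (n : ℂ) 1]
    push_cast
    field_simp
    ring

lemma RatioTendstoOne.summable {q : ℕ → ℂ} (h : RatioTendstoOne q) {z : ℂ} (hz : ‖z‖ < 1) :
    Summable fun n => q n * z ^ n := by
  obtain ⟨ρ, hρ, hq⟩ := h
  obtain ⟨r, hr, hr1⟩ := exists_between hz
  have ht : Tendsto (fun n => ‖ρ n * z‖) atTop (𝓝 ‖z‖) := by
    simpa using (hρ.mul_const z).norm
  refine summable_of_ratio_norm_eventually_le hr1 ?_
  filter_upwards [ht.eventually_le_const hr] with n hn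
  calc ‖q (n + 1) * z ^ (n + 1)‖ = ‖ρ n * z‖ * ‖q n * z ^ n‖ := by
        rw [hq, ← norm_mul]; congr 1; ring
    _ ≤ r * ‖q n * z ^ n‖ := by gcongr

lemma RatioTendstoOne.hasSum {q : ℕ → ℂ} (h : RatioTendstoOne q) {z : ℂ} (hz : ‖z‖ < 1) :
    HasSum (fun n => q n * z ^ n) (∑' n, q n * z ^ n) :=
  (h.summable hz).hasSum

/-- Termwise differentiation in the unit disk. -/
lemma hasDerivAt_tsum_pow {q : ℕ → ℂ} (h : RatioTendstoOne q) {z : ℂ} (hz : ‖z‖ < 1) :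
    HasDerivAt (fun w => ∑' n, q n * w ^ n) (∑' n, derivCoeff q n * z ^ n) z := by
  obtain ⟨r, hr, hr1⟩ := exists_between hz
  have hr0 : 0 ≤ r := (norm_nonneg z).trans hr.le
  have hs : Summable fun n => ‖q n * (r : ℂ) ^ n‖ :=
    (h.summable (by simpa [abs_of_nonneg hr0] using hr1)).norm
  have hf : ∀ n : ℕ, DifferentiableOn ℂ (fun w : ℂ => q n * w ^ n) (Metric.ball 0 r) :=
    fun n => by fun_prop
  have hle : ∀ (n : ℕ) (w : ℂ), w ∈ Metric.ball (0 : ℂ) r → ‖q n * w ^ n‖ ≤ ‖q n * (r : ℂ) ^ n‖ := by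
    intro n w hw
    have hw' : ‖w‖ ≤ r := (mem_ball_zero_iff.1 hw).le
    rw [norm_mul, norm_mul, norm_pow, norm_pow, Complex.norm_of_nonneg hr0]
    gcongr
  have hzr : z ∈ Metric.ball (0 : ℂ) r := mem_ball_zero_iff.2 hr
  have hd := (Complex.differentiableOn_tsum_of_summable_norm hs hf Metric.isOpen_ball hle
    |>.differentiableAt (Metric.isOpen_ball.mem_nhds hzr)).hasDerivAt
  have hsum := Complex.hasSum_deriv_of_summable_norm hs hf Metric.isOpen_ball hle hzr
  suffices hval : ∑' n, derivCoeff q n * z ^ n = deriv (fun w => ∑' n, q n * w ^ n) z by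
    rwa [hval]
  rw [← hsum.tsum_eq, hsum.summable.tsum_eq_zero_add]
  simp only [derivCoeff, deriv_const_mul_field, deriv_pow_field]
  simp only [Nat.cast_zero, zero_mul, mul_zero, zero_add, Nat.add_sub_cancel, Nat.cast_add,
    Nat.cast_one]
  exact tsum_congr fun n => by ring

/-- Multiplying a power series by `z` shifts its coefficients. -/
lemma hasSum_shift {u : ℕ → ℂ} {z S : ℂ} (h0 : u 0 = 0)
    (h : HasSum (fun n => u (n + 1) * z ^ n) S) : HasSum (fun n => u n * z ^ n) (z * S) := by
  rw [← hasSum_nat_add_iff' 1]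
  simp only [Finset.sum_range_one, h0, zero_mul, sub_zero]
  have hfun : (fun n => u (n + 1) * z ^ (n + 1)) = fun n => z * (u (n + 1) * z ^ n) :=
    funext fun n => by ring
  rw [hfun]
  exact h.mul_left z

/-- The coefficient recurrence gives the hypergeometric equation for the sum of the series. -/
lemma hypergeometric_ode {q : ℕ → ℂ} (h : RatioTendstoOne q) {α β γ : ℂ}
    (hrec : ∀ n : ℕ, (n + 1) * (n + γ) * q (n + 1) = (n + α) * (n + β) * q n)
    {z : ℂ} (hz : ‖z‖ < 1) :
    z * (z - 1) * (∑' n, derivCoeff (derivCoeff q) n * z ^ n)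
      + ((α + β + 1) * z - γ) * (∑' n, derivCoeff q n * z ^ n)
      + α * β * (∑' n, q n * z ^ n) = 0 := by
  have h0 := h.hasSum hz
  have h1 := h.derivCoeff.hasSum hz
  have h2 := h.derivCoeff.derivCoeff.hasSum hz
  set F := ∑' n, q n * z ^ n
  set F1 := ∑' n, derivCoeff q n * z ^ n
  set F2 := ∑' n, derivCoeff (derivCoeff q) n * z ^ n
  -- Each term of the equation as a series in `z ^ n`: `z F'`, `z F''` and `z² F''`.
  have e1 : HasSum (fun n : ℕ => (n * q n) * z ^ n) (z * F1) :=
    hasSum_shift (u := fun n : ℕ => n * q n) (by simp) (by simpa [derivCoeff] using h1)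
  have e2 : HasSum (fun n : ℕ => (n * derivCoeff q n) * z ^ n) (z * F2) :=
    hasSum_shift (u := fun n : ℕ => n * derivCoeff q n) (by simp)
      (by simpa [derivCoeff] using h2)
  have e3 : HasSum (fun n : ℕ => (n * (n - 1) * q n) * z ^ n) (z * (z * F2)) :=
    hasSum_shift (u := fun n : ℕ => n * (n - 1) * q n) (by simp)
      (by convert e2 using 2 with n; simp only [derivCoeff]; push_cast; ring)
  have key := (((e3.sub e2).add (e1.mul_left (α + β + 1))).sub (h1.mul_left γ)).add
    (h0.mul_left (α * β))
  have hzero : z * (z * F2) - z * F2 + (α + β + 1) * (z * F1) - γ * F1 + α * β * F = 0 := by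
    refine key.unique ?_
    convert hasSum_zero using 2 with n
    simp only [derivCoeff]
    linear_combination (-z ^ n) * hrec n
  linear_combination hzero

theorem stmt_8 (a b c : ℝ) (hc : ∀ k : ℕ, c ≠ -(k : ℝ)) (hc' : ∀ k : ℕ, 2 - c ≠ -(k : ℝ))
    (G : ℂ → ℂ)
    (hG : ∀ z : ℂ, G z = z ^ ((1 : ℂ) - (c : ℂ)) * ∑' n : ℕ,
      (((ascPochhammer ℝ n).eval (a + 1 - c) * (ascPochhammer ℝ n).eval (b + 1 - c) /
        ((ascPochhammer ℝ n).eval (2 - c) * n.factorial) : ℝ) : ℂ) * z ^ n) :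
    ∀ z : ℂ, ‖z‖ < 1 → ¬ (z.im = 0 ∧ -1 < z.re ∧ z.re ≤ 0) →
      z * (z - 1) * deriv (deriv G) z + (((a : ℂ) + b + 1) * z - c) * deriv G z
        + (a : ℂ) * b * G z = 0 := by
  intro z hz hslit
  set q : ℕ → ℂ := fun n =>
    (((ascPochhammer ℝ n).eval (a + 1 - c) * (ascPochhammer ℝ n).eval (b + 1 - c) /
        ((ascPochhammer ℝ n).eval (2 - c) * n.factorial) : ℝ) : ℂ) with hq
  have hγ : ∀ n : ℕ, (2 - c + n : ℝ) ≠ 0 := fun n h => hc' n (by linarith)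
  have hγC : ∀ n : ℕ, (2 - c + n : ℂ) ≠ 0 := fun n => by exact_mod_cast hγ n
  have hP : ∀ n : ℕ, (ascPochhammer ℝ n).eval (2 - c) ≠ 0 := by
    intro n
    induction n with
    | zero => simp
    | succ n ih => rw [ascPochhammer_succ_eval]; exact mul_ne_zero ih (hγ n)
  have hrec : ∀ n : ℕ, ((n : ℂ) + 1) * (n + (2 - c)) * q (n + 1)
      = (n + (a + 1 - c)) * (n + (b + 1 - c)) * q n := by
    intro n
    have hR : ((n : ℝ) + 1) * (n + (2 - c)) *
        ((ascPochhammer ℝ (n + 1)).eval (a + 1 - c) * (ascPochhammer ℝ (n + 1)).eval (b + 1 - c) /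
          ((ascPochhammer ℝ (n + 1)).eval (2 - c) * (n + 1).factorial))
        = (n + (a + 1 - c)) * (n + (b + 1 - c)) *
        ((ascPochhammer ℝ n).eval (a + 1 - c) * (ascPochhammer ℝ n).eval (b + 1 - c) /
          ((ascPochhammer ℝ n).eval (2 - c) * n.factorial)) := by
      have h1 := hP n
      have h2 := hγ n
      have h3 : (n.factorial : ℝ) ≠ 0 := by positivity
      have h4 : (n : ℝ) + 1 ≠ 0 := by positivity
      simp only [ascPochhammer_succ_eval, Nat.factorial_succ]
      push_cast
      rw [mul_div_assoc', mul_div_assoc', div_eq_div_iff (by simp [*]) (by simp [*])]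
      ring
    simp only [hq]
    exact_mod_cast congrArg (fun x : ℝ => (x : ℂ)) hR
  have hratio : RatioTendstoOne q := by
    refine ⟨fun n => ((a + 1 - c) + 1 * (n : ℂ)) / (1 + 1 * n) *
      (((b + 1 - c) + 1 * (n : ℂ)) / ((2 - c) + 1 * n)), ?_, fun n => ?_⟩
    · simpa using (tendsto_add_mul_div_add_mul_atTop_nhds (a + 1 - c : ℂ) 1 1 one_ne_zero).mul
        (tendsto_add_mul_div_add_mul_atTop_nhds (b + 1 - c : ℂ) (2 - c) 1 one_ne_zero)
    · have h1 : (1 + 1 * (n : ℂ)) ≠ 0 := by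
        rw [one_mul, add_comm]; exact Nat.cast_add_one_ne_zero n
      have h2 : ((2 - c) + 1 * (n : ℂ)) ≠ 0 := by simpa using hγC n
      beta_reduce
      rw [div_mul_div_comm, div_mul_eq_mul_div, eq_div_iff (mul_ne_zero h1 h2)]
      linear_combination hrec n
  set F : ℂ → ℂ := fun w => ∑' n, q n * w ^ n with hF
  set F1 : ℂ → ℂ := fun w => ∑' n, derivCoeff q n * w ^ n with hF1
  set F2 : ℂ → ℂ := fun w => ∑' n, derivCoeff (derivCoeff q) n * w ^ n with hF2
  have ode := hypergeometric_ode hratio hrec hz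
  change z * (z - 1) * F2 z + _ * F1 z + _ * F z = 0 at ode
  have hGF : G = fun w => w ^ ((1 : ℂ) - c) * F w := funext hG
  -- Inside the unit disk, avoiding `(-1, 0]` is the same as avoiding `(-∞, 0]`.
  have hzs : z ∈ Complex.slitPlane := by
    by_contra hn
    rw [Complex.mem_slitPlane_iff, not_or, not_lt, not_not] at hn
    refine hslit ⟨hn.2, ?_, hn.1⟩
    linarith [(abs_le.1 (Complex.abs_re_le_norm z)).1]
  have hpow : ∀ w ∈ Complex.slitPlane,
      HasDerivAt (fun w : ℂ => w ^ ((1 : ℂ) - c)) ((1 - c) * (w ^ ((1 : ℂ) - c) / w)) w := by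
    intro w hw
    have := (Complex.hasStrictDerivAt_cpow_const (c := (1 : ℂ) - c) hw).hasDerivAt
    rwa [Complex.cpow_sub _ _ (Complex.slitPlane_ne_zero hw), Complex.cpow_one] at this
  have hG1 : ∀ w ∈ Complex.slitPlane, ‖w‖ < 1 → HasDerivAt G
      ((1 - c) * (w ^ ((1 : ℂ) - c) / w) * F w + w ^ ((1 : ℂ) - c) * F1 w) w := by
    intro w hw hw1
    rw [hGF]
    exact (hpow w hw).mul (hasDerivAt_tsum_pow hratio hw1)
  -- The formula for `G'` holds near `z`, so it can be differentiated at `z`.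
  have hev : deriv G =ᶠ[𝓝 z] fun w =>
      (1 - c) * (w ^ ((1 : ℂ) - c) / w) * F w + w ^ ((1 : ℂ) - c) * F1 w := by
    filter_upwards [Complex.isOpen_slitPlane.mem_nhds hzs,
      (isOpen_lt continuous_norm continuous_const).mem_nhds hz] with w hw hw1
    exact (hG1 w hw hw1).deriv
  have hz0 : z ≠ 0 := Complex.slitPlane_ne_zero hzs
  have hG2 := (((((hpow z hzs).div (hasDerivAt_id z) hz0).const_mul ((1 : ℂ) - c)).mul
    (hasDerivAt_tsum_pow hratio hz)).add
      ((hpow z hzs).mul (hasDerivAt_tsum_pow hratio.derivCoeff hz))).congr_of_eventuallyEq hev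
  rw [hG2.deriv, (hG1 z hzs hz).deriv, hGF]
  change z * (z - 1) * ((1 - c) * (((1 - c) * (z ^ ((1 : ℂ) - c) / z) * z
    - z ^ ((1 : ℂ) - c) * 1) / z ^ 2) * F z + (1 - c) * (z ^ ((1 : ℂ) - c) / z) * F1 z
    + ((1 - c) * (z ^ ((1 : ℂ) - c) / z) * F1 z + z ^ ((1 : ℂ) - c) * F2 z)) + _ + _ * (_ * F z) = 0
  generalize z ^ ((1 : ℂ) - c) = p
  field_simp
  linear_combination p * z * ode
end

section
/- Let t₁, t₂, t₃ ∈ ℝ and let λ ∈ ℂ with Im λ ≤ 0. Define ω(z) = z^{−t₁}(z−1)^{−t₂}(z−λ)^{−t₃} for z in the upper half-plane ℍ. Then for every z ∈ ℍ, the derivative with respect to z of the function z ↦ −t₃ · z^{1−t₁}(z−1)^{1−t₂}(z−λ)^{−t₃−1} equals λ(λ−1) · (t₃(t₃+1)/(z−λ)²) · ω(z) + [(t₁+t₂+2t₃)λ − (t₁+t₃)] · (t₃/(z−λ)) · ω(z) + t₃(t₁+t₂+t₃−1) · ω(z). -/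
/-!
For `z` in the upper half-plane, `z`, `z - 1` and `z - λ` have positive imaginary part, so they lie
in the slit plane, where `w ↦ w ^ c` has derivative `c * w ^ (c - 1)` (`hasDerivAt_sub_cpow`). The
product rule then gives
`-t₃ ω(z) [(1 - t₁)(z - 1)/u + (1 - t₂) z/u - (t₃ + 1) z (z - 1)/u²]` with `u = z - λ`, and expanding
`z = u + λ` in powers of `u` yields the three terms of the formula.
-/

theorem hasDerivAt_sub_cpow (a c z : ℂ) (h : 0 < (z - a).im) :
    HasDerivAt (fun w : ℂ => (w - a) ^ c) (c * (z - a) ^ (c - 1)) z := by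
  have hs : z - a ∈ Complex.slitPlane := Or.inr h.ne'
  simpa using ((hasDerivAt_id z).sub_const a).cpow_const (c := c) hs


/-- The exact-form computation establishing the hypergeometric relation for
`ω(z) = z^{−t₁}(z−1)^{−t₂}(z−λ)^{−t₃}` on the upper half-plane: the `z`-derivative of
`−t₃ z^{1−t₁}(z−1)^{1−t₂}(z−λ)^{−t₃−1}` equals
`λ(λ−1)(t₃(t₃+1)/(z−λ)²)ω + [(t₁+t₂+2t₃)λ − (t₁+t₃)](t₃/(z−λ))ω + t₃(t₁+t₂+t₃−1)ω`. -/
theorem stmt_15 (t₁ t₂ t₃ : ℝ) (l : ℂ) (hl : l.im ≤ 0)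
    (ω : ℂ → ℂ)
    (hω : ∀ z : ℂ, ω z = z ^ (-(t₁ : ℂ)) * (z - 1) ^ (-(t₂ : ℂ)) * (z - l) ^ (-(t₃ : ℂ))) :
    ∀ z : ℂ, 0 < z.im →
      deriv (fun w : ℂ =>
          -(t₃ : ℂ) * w ^ ((1 : ℂ) - (t₁ : ℂ)) * (w - 1) ^ ((1 : ℂ) - (t₂ : ℂ)) *
            (w - l) ^ (-(t₃ : ℂ) - 1)) z
        = l * (l - 1) * ((t₃ : ℂ) * ((t₃ : ℂ) + 1) / (z - l) ^ 2) * ω z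
          + (((t₁ : ℂ) + t₂ + 2 * t₃) * l - ((t₁ : ℂ) + t₃)) * ((t₃ : ℂ) / (z - l)) * ω z
          + (t₃ : ℂ) * ((t₁ : ℂ) + t₂ + t₃ - 1) * ω z := by
  intro z hz
  have im_ne : ∀ w : ℂ, 0 < w.im → w ≠ 0 := by
    rintro w hw rfl
    simp at hw
  have h1 : 0 < (z - 1).im := by simpa using hz
  have hu : 0 < (z - l).im := by
    rw [Complex.sub_im]
    linarith
  have z0 := im_ne z hz
  have z1 := im_ne _ h1
  have u0 := im_ne _ hu
  have d0 := hasDerivAt_sub_cpow 0 (1 - (t₁ : ℂ)) z (by simpa using hz)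
  simp only [sub_zero] at d0
  have d1 := hasDerivAt_sub_cpow 1 (1 - (t₂ : ℂ)) z h1
  have d2 := hasDerivAt_sub_cpow l (-(t₃ : ℂ) - 1) z hu
  have D := ((d0.const_mul (-(t₃ : ℂ))).mul d1).mul d2
  refine D.deriv.trans ?_
  -- Express every power through `ω`'s three factors `z ^ (-t₁)`, `(z - 1) ^ (-t₂)`, `(z - l) ^ (-t₃)`.
  have up : ∀ w : ℂ, w ≠ 0 → ∀ t : ℂ, w ^ (1 - t) = w * w ^ (-t) := by
    intro w hw t
    rw [sub_eq_add_neg, Complex.cpow_add _ _ hw, Complex.cpow_one]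
  have e (t : ℂ) : (1 : ℂ) - t - 1 = -t := by ring
  simp only [Pi.mul_apply, hω, e, up z z0, up _ z1, Complex.cpow_sub _ _ u0, Complex.cpow_one]
  generalize z ^ (-(t₁ : ℂ)) = A
  generalize (z - 1) ^ (-(t₂ : ℂ)) = B
  generalize (z - l) ^ (-(t₃ : ℂ)) = C
  obtain ⟨u, rfl⟩ : ∃ u, z = u + l := ⟨z - l, by ring⟩
  rw [add_sub_cancel_right] at *
  field_simp
  ring
end

section
/- Let t₁, t₂, t₃, t₄ ∈ (0,1) be real numbers with t₁ + t₂ + t₃ + t₄ = 2. Then 1 − |1−t₁−t₃| − |1−t₂−t₃| − |1−t₁−t₂| = 2 · min_{j=1,2,3,4} min(t_j, 1−t_j). -/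
/-! With `x = 1 - t₁ - t₃`, `y = 1 - t₂ - t₃`, `z = 1 - t₁ - t₂`, the sum `|x| + |y| + |z|` is the
maximum of the eight forms `±x ± y ± z`. Since `t₁ + t₂ + t₃ + t₄ = 2`, these eight forms are exactly
`1 - 2 tⱼ` and `1 - 2 (1 - tⱼ)` for `j = 1, …, 4`, so one minus the maximum is twice the minimum of
the `tⱼ` and `1 - tⱼ`. -/

/-- For `t₁, t₂, t₃, t₄ ∈ (0,1)` with `t₁+t₂+t₃+t₄ = 2`,
`1 − |1−t₁−t₃| − |1−t₂−t₃| − |1−t₁−t₂| = 2 minⱼ min(tⱼ, 1−tⱼ)`. -/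
theorem stmt_18 (t₁ t₂ t₃ t₄ : ℝ)
    (h₁ : t₁ ∈ Set.Ioo (0 : ℝ) 1) (h₂ : t₂ ∈ Set.Ioo (0 : ℝ) 1)
    (h₃ : t₃ ∈ Set.Ioo (0 : ℝ) 1) (h₄ : t₄ ∈ Set.Ioo (0 : ℝ) 1)
    (hsum : t₁ + t₂ + t₃ + t₄ = 2) :
    1 - |1 - t₁ - t₃| - |1 - t₂ - t₃| - |1 - t₁ - t₂|
      = 2 * min (min (min t₁ (1 - t₁)) (min t₂ (1 - t₂)))
          (min (min t₃ (1 - t₃)) (min t₄ (1 - t₄))) := by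
  apply le_antisymm
  -- Every signed sum `±x ± y ± z` is at most `|x| + |y| + |z|`.
  · have hx := le_abs_self (1 - t₁ - t₃)
    have hx' := neg_le_abs (1 - t₁ - t₃)
    have hy := le_abs_self (1 - t₂ - t₃)
    have hy' := neg_le_abs (1 - t₂ - t₃)
    have hz := le_abs_self (1 - t₁ - t₂)
    have hz' := neg_le_abs (1 - t₁ - t₂)
    rw [← div_le_iff₀' two_pos]
    simp only [le_min_iff]
    refine ⟨⟨⟨?_, ?_⟩, ⟨?_, ?_⟩⟩, ⟨⟨?_, ?_⟩, ⟨?_, ?_⟩⟩⟩ <;> linarith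
  -- For the actual signs of `x`, `y`, `z` the sum is attained by one of the eight forms.
  · obtain ⟨m, hm⟩ : ∃ m, m = min (min (min t₁ (1 - t₁)) (min t₂ (1 - t₂)))
      (min (min t₃ (1 - t₃)) (min t₄ (1 - t₄))) := ⟨_, rfl⟩
    rw [← hm]
    have hle := hm.le
    simp only [le_min_iff] at hle
    obtain ⟨⟨⟨_, _⟩, ⟨_, _⟩⟩, ⟨⟨_, _⟩, ⟨_, _⟩⟩⟩ := hle
    rcases abs_choice (1 - t₁ - t₃) with hx | hx <;>
    rcases abs_choice (1 - t₂ - t₃) with hy | hy <;>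
    rcases abs_choice (1 - t₁ - t₂) with hz | hz <;>
    rw [hx, hy, hz] <;> linarith
end
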